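/- arXiv:2006.09669 — 3 statements merged into one kernel-verified Lean document; each statement's English description precedes it below -/
import Mathlib

section
/- For every family (c_d) of non-negative integers indexed by the divisors d of n with d ≠ n, almost all zero, the homogeneous component of R in degree Σ_d c_d(ξ^d − 2) is an infinite cyclic group generated by the monomial ∏_d u_d^{c_d}. In particular, the subring of R generated by the elements u_d is the polynomial ring ℤ[u_d : d | n, d ≠ n] (the monomials in the u_d are ℤ-linearly independent and of infinite additive order). -/
/-! The relations defining `R` all lie in the ideal generated by the `a_d`, so sending `u_d ↦ X_d`
and `a_d ↦ 0` defines a ring homomorphism `R → ℤ[X_d]` which is a left inverse of the evaluation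
`ℤ[X_d] → R`, `X_d ↦ u_d` (`retract_aeval`).  Hence the evaluation is injective and the monomials in
the `u_d` have infinite order.  For the homogeneous component, write a monomial as `u^f a^g`; its
degree is `Σ (f_d + g_d) ξ^d − 2 |f|` (`mdeg_sumElim`).  If this equals `Σ c_d ξ^d − 2 |c|`, then
`f + g = c` and `|f| = |c|`, so `g = 0` and `f = c`: the only monomial of that degree is `u^c`
(`mdeg_eq_iff`). -/

/-! Let `n` be a product of distinct odd primes.  `R` is the commutative ring generated by
elements `u_d` and `a_d`, one for each divisor `d` of `n` with `d ≠ n`, subject to the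
relations `(n/d)·a_d = 0` and
`(d/gcd(d,s))·a_s·u_d = (s/gcd(d,s))·u_s·a_d` for all such divisors `d`, `s`.  It is graded
by the free abelian group on the symbols `ξ^d` (`d ∣ n`, `d ≠ n`) together with a
`ℤ`-summand recording dimension, with `deg u_d = ξ^d − 2` and `deg a_d = ξ^d` (the symbol
`ξ^d` carrying dimension `2`). -/

/-- The index type of the divisors `d ∣ n`, `d ≠ n`. -/
abbrev DivIdx (n : ℕ) := {d : ℕ // d ∣ n ∧ d ≠ n}

/-- Generators: `Sum.inl d` is the Euler class style generator `u_d` and `Sum.inr d` is the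
orientation class style generator `a_d`. -/
abbrev RGen (n : ℕ) := DivIdx n ⊕ DivIdx n

open MvPolynomial in
/-- The defining relations of the ring `R`. -/
def relSet (n : ℕ) : Set (MvPolynomial (RGen n) ℤ) :=
  (Set.range fun d : DivIdx n => (n / d.1) • (X (Sum.inr d) : MvPolynomial (RGen n) ℤ)) ∪
  (Set.range fun ds : DivIdx n × DivIdx n =>
    (ds.1.1 / Nat.gcd ds.1.1 ds.2.1) •
        ((X (Sum.inr ds.2) : MvPolynomial (RGen n) ℤ) * X (Sum.inl ds.1)) -
      (ds.2.1 / Nat.gcd ds.1.1 ds.2.1) •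
        ((X (Sum.inl ds.2) : MvPolynomial (RGen n) ℤ) * X (Sum.inr ds.1)))

/-- The ring `R`: the polynomial ring on the generators `u_d`, `a_d` modulo the relations. -/
abbrev Rring (n : ℕ) := MvPolynomial (RGen n) ℤ ⧸ Ideal.span (relSet n)

/-- The image of `u_d` in `R`. -/
noncomputable def uGen (n : ℕ) (d : DivIdx n) : Rring n :=
  Ideal.Quotient.mk (Ideal.span (relSet n)) (MvPolynomial.X (Sum.inl d))

/-- The grading group: the free abelian group on the symbols `ξ^d` together with a
`ℤ`-summand recording dimension. -/
abbrev RDeg (n : ℕ) := (DivIdx n →₀ ℤ) × ℤ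

/-- Degrees of the generators: `deg u_d = ξ^d − 2` and `deg a_d = ξ^d` (where the
`ℤ`-component records the dimension in excess of twice the `ξ`-part, so that the degree
`Σ_d c_d ξ^d − 2μ` is the pair `(Σ_d c_d ξ^d, −2μ)`). -/
noncomputable def degOfGen (n : ℕ) : RGen n → RDeg n
  | Sum.inl d => (Finsupp.single d 1, -2)
  | Sum.inr d => (Finsupp.single d 1, 0)

/-- The degree of a monomial of `MvPolynomial (RGen n) ℤ`. -/
noncomputable def mdeg (n : ℕ) (m : RGen n →₀ ℕ) : RDeg n :=
  m.sum fun g c => (c : ℤ) • degOfGen n g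

/-- The homogeneous component of `R` in degree `α`: the additive subgroup generated by the
images of the monomials of degree `α`. -/
noncomputable def Rcomp (n : ℕ) (α : RDeg n) : AddSubgroup (Rring n) :=
  AddSubgroup.closure {x | ∃ m : RGen n →₀ ℕ, mdeg n m = α ∧
    x = Ideal.Quotient.mk (Ideal.span (relSet n)) (MvPolynomial.monomial m 1)}

/-- The degree `α = Σ_d c_d ξ^d − 2μ`. -/
noncomputable def degAlpha (n : ℕ) (c : DivIdx n →₀ ℕ) (μ : ℤ) : RDeg n :=
  (Finsupp.mapRange (fun t : ℕ => (t : ℤ)) (by simp) c, -2 * μ)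

/-- For the degree `α = Σ_d c_d ξ^d − 2μ` and `m ∣ n` one has
`|α^{C_m}| = 2(Σ_{d : m ∣ d} c_d − μ)`; `mAlpha` is the product
`m(α) = ∏ { p prime : p ∣ n, |α^{C_p}| ≤ 0 }`. -/
def mAlpha (n : ℕ) (c : DivIdx n →₀ ℕ) (μ : ℤ) : ℕ :=
  ∏ q ∈ n.primeFactors,
    if (∑ d ∈ c.support, if q ∣ d.1 then (c d : ℤ) else 0) ≤ μ then q else 1

/-- The monomial `∏_d u_d^(c d)`. -/
noncomputable def uMonomial (n : ℕ) (c : DivIdx n →₀ ℕ) : RGen n →₀ ℕ :=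
  Finsupp.embDomain ⟨Sum.inl, Sum.inl_injective⟩ c

/-- The image of the monomial `∏_d u_d^(c d)` in `R`. -/
noncomputable def uElem (n : ℕ) (c : DivIdx n →₀ ℕ) : Rring n :=
  Ideal.Quotient.mk (Ideal.span (relSet n)) (MvPolynomial.monomial (uMonomial n c) 1)

/-- The retraction `R → ℤ[X_d]` given by `u_d ↦ X_d` and `a_d ↦ 0`. -/
noncomputable def retract (n : ℕ) : Rring n →+* MvPolynomial (DivIdx n) ℤ :=
  Ideal.Quotient.lift (Ideal.span (relSet n))
    (MvPolynomial.aeval (Sum.elim MvPolynomial.X fun _ => 0) :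
      MvPolynomial (RGen n) ℤ →ₐ[ℤ] MvPolynomial (DivIdx n) ℤ).toRingHom (by
    intro x hx
    refine (Ideal.span_le (I := RingHom.ker _)).2 ?_ hx
    rintro _ (⟨d, rfl⟩ | ⟨⟨d, s⟩, rfl⟩) <;>
      simp [RingHom.mem_ker])

lemma retract_aeval (n : ℕ) (P : MvPolynomial (DivIdx n) ℤ) :
    retract n (MvPolynomial.aeval (R := ℤ) (fun d : DivIdx n => uGen n d) P) = P := by
  induction P using MvPolynomial.induction_on with
  | C a => simp
  | add p q hp hq => rw [map_add, map_add, hp, hq]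
  | mul_X p d hp =>
    rw [map_mul, map_mul, hp, MvPolynomial.aeval_X]
    simp [retract, uGen]

lemma uElem_eq_aeval (n : ℕ) (c : DivIdx n →₀ ℕ) :
    uElem n c = MvPolynomial.aeval (R := ℤ) (fun d : DivIdx n => uGen n d)
      (MvPolynomial.monomial c 1) := by
  rw [MvPolynomial.aeval_monomial, uElem, uMonomial, MvPolynomial.monomial_eq,
    Finsupp.prod_embDomain]
  simp [Finsupp.prod, uGen, map_prod]

/-- The degree of the monomial `u^f a^g` is `Σ (f_d + g_d) ξ^d − 2 |f|`. -/
lemma mdeg_sumElim (n : ℕ) (f g : DivIdx n →₀ ℕ) :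
    mdeg n (Finsupp.sumElim f g) = degAlpha n (f + g) (∑ d ∈ f.support, (f d : ℤ)) := by
  have key : mdeg n (Finsupp.sumElim f g) =
      (f.sum fun d t => (t : ℤ) • degOfGen n (Sum.inl d)) +
        g.sum fun d t => (t : ℤ) • degOfGen n (Sum.inr d) := by
    rw [mdeg, Finsupp.sum_sumElim]
    rfl
  rw [key]
  refine Prod.ext (Finsupp.ext fun d => ?_) ?_
  · simp only [Finsupp.sum, degOfGen, degAlpha, Prod.fst_add, Prod.fst_sum, Prod.smul_fst,
      Finsupp.add_apply, Finsupp.finsetSum_apply, Finsupp.smul_apply, Finsupp.single_apply,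
      Finsupp.mapRange_apply]
    simp
    grind
  · simp [Finsupp.sum, degOfGen, degAlpha, Prod.snd_sum, Finset.mul_sum, mul_comm]

/-- The only monomial of degree `Σ c_d (ξ^d − 2)` is `∏ u_d ^ c_d`. -/
lemma mdeg_eq_iff (n : ℕ) (c : DivIdx n →₀ ℕ) (m : RGen n →₀ ℕ) :
    mdeg n m = degAlpha n c (∑ d ∈ c.support, (c d : ℤ)) ↔ m = uMonomial n c := by
  have hu : uMonomial n c = Finsupp.sumElim c 0 := by
    ext (d | d)
    · exact Finsupp.embDomain_apply_self _ c d
    · rw [uMonomial, Finsupp.embDomain_of_notMem_range] <;> simp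
  constructor
  · obtain ⟨⟨f, g⟩, rfl⟩ := Finsupp.sumFinsuppEquivProdFinsupp.symm.surjective m
    change mdeg n (Finsupp.sumElim f g) = _ → Finsupp.sumElim f g = _
    rw [mdeg_sumElim]
    intro h
    have h1 : f + g = c :=
      Finsupp.mapRange_injective _ Nat.cast_zero Nat.cast_injective (congrArg Prod.fst h)
    have h2 : ∑ d ∈ f.support, (f d : ℤ) = ∑ d ∈ c.support, (c d : ℤ) := by
      have := congrArg Prod.snd h
      simp only [degAlpha] at this
      linarith
    have h3 : f.degree = c.degree := by
      simp only [Finsupp.degree_apply]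
      exact_mod_cast h2
    have h4 : g = 0 := by
      rw [← h1, map_add] at h3
      exact (Finsupp.degree_eq_zero_iff g).1 (by omega)
    subst h4
    rw [hu, ← h1, add_zero]
  · rintro rfl
    rw [hu, mdeg_sumElim, add_zero]

/-! ## STATEMENT 11
For every family `(c_d)` of non-negative integers indexed by the divisors `d` of `n` with
`d ≠ n`, almost all zero, the homogeneous component of `R` in degree `Σ_d c_d(ξ^d − 2)` is
an infinite cyclic group generated by the monomial `∏_d u_d^{c_d}`.  In particular, the
subring of `R` generated by the elements `u_d` is the polynomial ring
`ℤ[u_d : d ∣ n, d ≠ n]` (the monomials in the `u_d` are `ℤ`-linearly independent and of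
infinite additive order). -/
theorem statement11 (k : ℕ) (p : Fin k → ℕ) (hp : ∀ i, Nat.Prime (p i))
    (hodd : ∀ i, Odd (p i)) (hinj : Function.Injective p)
    (n : ℕ) (hn : n = ∏ i, p i) :
    (∀ c : DivIdx n →₀ ℕ,
      Rcomp n (degAlpha n c (∑ d ∈ c.support, (c d : ℤ))) =
        AddSubgroup.zmultiples (uElem n c) ∧
      ¬ IsOfFinAddOrder (uElem n c)) ∧
    Function.Injective
      (MvPolynomial.aeval (R := ℤ) (fun d : DivIdx n => uGen n d) :
        MvPolynomial (DivIdx n) ℤ → Rring n) := by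
  have hinj' : Function.Injective
      (MvPolynomial.aeval (R := ℤ) (fun d : DivIdx n => uGen n d) :
        MvPolynomial (DivIdx n) ℤ → Rring n) :=
    Function.LeftInverse.injective (g := retract n) (retract_aeval n)
  refine ⟨fun c => ⟨?_, ?_⟩, hinj'⟩
  · rw [Rcomp, AddSubgroup.zmultiples_eq_closure]
    congr 1
    ext x
    simp [mdeg_eq_iff, uElem]
  · rw [uElem_eq_aeval, isOfFinAddOrder_iff_nsmul_eq_zero]
    rintro ⟨N, hN, h⟩
    rw [← map_nsmul] at h
    have h0 := hinj' (h.trans (map_zero _).symm)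
    rw [smul_eq_zero, MvPolynomial.monomial_eq_zero] at h0
    omega
end

section
/- For every divisor d of n with d ≠ n: (1) multiplication by u_d is injective on R, i.e. for every degree α = Σ_e c_e ξ^e − 2μ (c_e ≥ 0) the multiplication map u_d · : R_α → R_{α + ξ^d − 2} between homogeneous components is injective; and (2) for every even degree α as above, m(α) divides m(α + ξ^d − 2). -/
/-! ### The generators and two augmentations -/

/-- The image of `a_d` in `R`. -/
noncomputable def aGen (n : ℕ) (d : DivIdx n) : Rring n :=
  Ideal.Quotient.mk (Ideal.span (relSet n)) (MvPolynomial.X (Sum.inr d))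

lemma torsion_rel (n : ℕ) (d : DivIdx n) : ((n / d.1 : ℕ) : Rring n) * aGen n d = 0 := by
  have h := Ideal.Quotient.eq_zero_iff_mem.2
    (Ideal.subset_span (s := relSet n) (Or.inl ⟨d, rfl⟩))
  simpa only [nsmul_eq_mul, map_mul, map_natCast, uGen, aGen] using h

lemma exchange_rel (n : ℕ) (d s : DivIdx n) :
    ((d.1 / Nat.gcd d.1 s.1 : ℕ) : Rring n) * (aGen n s * uGen n d) =
      ((s.1 / Nat.gcd d.1 s.1 : ℕ) : Rring n) * (uGen n s * aGen n d) := by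
  have h := Ideal.Quotient.eq_zero_iff_mem.2
    (Ideal.subset_span (s := relSet n) (Or.inr ⟨(d, s), rfl⟩))
  rw [map_sub, sub_eq_zero] at h
  simpa only [nsmul_eq_mul, map_mul, map_natCast, uGen, aGen] using h

/-- The augmentation `R → ℤ` with `u_d ↦ 1` and `a_d ↦ 0`. -/
noncomputable def augZ (n : ℕ) : Rring n →+* ℤ :=
  Ideal.Quotient.lift _
    (MvPolynomial.aeval (Sum.elim (fun _ => 1) (fun _ => 0)) :
      MvPolynomial (RGen n) ℤ →ₐ[ℤ] ℤ).toRingHom (by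
    intro x hx
    refine (Ideal.span_le (I := RingHom.ker _)).2 ?_ hx
    rintro _ (⟨d, rfl⟩ | ⟨⟨d, s⟩, rfl⟩) <;> simp [RingHom.mem_ker])

@[simp] lemma augZ_uGen (n : ℕ) (d : DivIdx n) : augZ n (uGen n d) = 1 := by
  simp [augZ, uGen]

lemma div_gcd_mul_comm (d s : ℕ) : d / Nat.gcd d s * s = s / Nat.gcd d s * d := by
  rw [Nat.div_mul_right_comm (Nat.gcd_dvd_left d s), Nat.div_mul_right_comm (Nat.gcd_dvd_right d s),
    mul_comm]

/-- The augmentation `R → ZMod n` with `u_d ↦ 1` and `a_d ↦ d`. -/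
noncomputable def augMod (n : ℕ) : Rring n →+* ZMod n :=
  Ideal.Quotient.lift _
    (MvPolynomial.aeval (Sum.elim (fun _ => 1) (fun d => (d.1 : ZMod n))) :
      MvPolynomial (RGen n) ℤ →ₐ[ℤ] ZMod n).toRingHom (by
    intro x hx
    refine (Ideal.span_le (I := RingHom.ker _)).2 ?_ hx
    rintro _ (⟨d, rfl⟩ | ⟨⟨d, s⟩, rfl⟩)
    · simp [RingHom.mem_ker, ← Nat.cast_mul, Nat.div_mul_cancel d.2.1]
    · simp [RingHom.mem_ker, ← Nat.cast_mul, div_gcd_mul_comm d.1 s.1])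

@[simp] lemma augMod_uGen (n : ℕ) (d : DivIdx n) : augMod n (uGen n d) = 1 := by
  simp [augMod, uGen]

@[simp] lemma augMod_aGen (n : ℕ) (d : DivIdx n) : augMod n (aGen n d) = (d.1 : ZMod n) := by
  simp [augMod, aGen]

/-! ### Monomials of a given degree -/

lemma mdeg_add (n : ℕ) (m m' : RGen n →₀ ℕ) : mdeg n (m + m') = mdeg n m + mdeg n m' := by
  unfold mdeg
  exact Finsupp.sum_add_index' (by simp) (by intros; push_cast; rw [add_smul])

lemma mdeg_single (n : ℕ) (g : RGen n) : mdeg n (Finsupp.single g 1) = degOfGen n g := by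
  simp [mdeg]

/-- Every monomial is `u^A a^B` for multisets `A`, `B`, and its degree records `A + B` and `|A|`. -/
lemma monomial_eq (n : ℕ) (m : RGen n →₀ ℕ) : ∃ A B : Multiset (DivIdx n),
    Ideal.Quotient.mk (Ideal.span (relSet n)) (MvPolynomial.monomial m 1) =
      (A.map (uGen n)).prod * (B.map (aGen n)).prod ∧
    (∀ e, (mdeg n m).1 e = ((A + B).count e : ℤ)) ∧ (mdeg n m).2 = -2 * (A.card : ℤ) := by
  obtain ⟨M, rfl⟩ := Multiset.toFinsupp.surjective m
  induction M using Multiset.induction with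
  | empty => exact ⟨0, 0, by simp [mdeg]⟩
  | cons g M ih =>
    obtain ⟨A, B, h1, h2, h3⟩ := ih
    have hm : (MvPolynomial.monomial (Multiset.toFinsupp (g ::ₘ M)) 1 : MvPolynomial (RGen n) ℤ) =
        MvPolynomial.X g * MvPolynomial.monomial (Multiset.toFinsupp M) 1 := by
      rw [← Multiset.singleton_add, map_add, Multiset.toFinsupp_singleton, MvPolynomial.X,
        MvPolynomial.monomial_mul, one_mul]
    have hd : mdeg n (Multiset.toFinsupp (g ::ₘ M)) =
        degOfGen n g + mdeg n (Multiset.toFinsupp M) := by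
      rw [← Multiset.singleton_add, map_add, Multiset.toFinsupp_singleton, mdeg_add, mdeg_single]
    rw [hm, hd, map_mul, h1]
    rcases g with d | d
    · refine ⟨d ::ₘ A, B, ?_, ?_, ?_⟩
      · rw [Multiset.map_cons, Multiset.prod_cons, uGen, mul_assoc]
      · intro e
        simp only [degOfGen, Prod.fst_add, Finsupp.add_apply, h2, Finsupp.single_apply,
          Multiset.cons_add, Multiset.count_cons]
        simp only [eq_comm (a := d) (b := e)]
        split_ifs <;> push_cast <;> ring
      · simp only [degOfGen, Prod.snd_add, h3, Multiset.card_cons]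
        push_cast; ring
    · refine ⟨A, d ::ₘ B, ?_, ?_, ?_⟩
      · rw [Multiset.map_cons, Multiset.prod_cons, aGen, mul_left_comm]
      · intro e
        simp only [degOfGen, Prod.fst_add, Finsupp.add_apply, h2, Finsupp.single_apply,
          Multiset.add_cons, Multiset.count_cons]
        simp only [eq_comm (a := d) (b := e)]
        split_ifs <;> push_cast <;> ring
      · simp only [degOfGen, Prod.snd_add, h3, zero_add]

/-- A component is contained in every subgroup containing the monomials `u^A a^B` of its degree. -/
lemma Rcomp_le (n : ℕ) (c : DivIdx n →₀ ℕ) (μ : ℤ) (G : AddSubgroup (Rring n))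
    (h : ∀ A B : Multiset (DivIdx n), A + B = Finsupp.toMultiset c → (A.card : ℤ) = μ →
      (A.map (uGen n)).prod * (B.map (aGen n)).prod ∈ G) :
    Rcomp n (degAlpha n c μ) ≤ G := by
  refine (AddSubgroup.closure_le _).2 ?_
  rintro _ ⟨m, hm, rfl⟩
  obtain ⟨A, B, h1, h2, h3⟩ := monomial_eq n m
  rw [h1]
  rw [hm] at h2 h3
  refine h A B ?_ ?_
  · ext e
    have := h2 e
    simp only [degAlpha, Finsupp.mapRange_apply] at this
    rw [Finsupp.count_toMultiset]
    exact_mod_cast this.symm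
  · simp only [degAlpha] at h3
    linarith

/-! ### The exchange argument at a prime -/

/-- If `w_s u_d = u_s w_d` for `d, s ∈ T`, then `u^A w^B` with `B ⊆ T` depends only on `A + B` and
the cardinality of `B`. -/
lemma exchange {ι S : Type*} [DecidableEq ι] [CommRing S] (u w : ι → S) (T : ι → Prop)
    (hw : ∀ d s, T d → T s → w s * u d = u s * w d) (B' : Multiset ι) :
    ∀ A A' B : Multiset ι, A + B = A' + B' → B.card = B'.card → (∀ d ∈ B, T d) →
      (∀ d ∈ B', T d) →
      (A.map u).prod * (B.map w).prod = (A'.map u).prod * (B'.map w).prod := by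
  induction B' using Multiset.induction with
  | empty =>
    intro A A' B h hc _ _
    obtain rfl : B = 0 := by simpa using hc
    rw [add_zero, add_zero] at h
    rw [h]
  | cons s B' ih =>
    intro A A' B h hc hB hB'
    by_cases hs : s ∈ B
    · obtain ⟨B, rfl⟩ := Multiset.exists_cons_of_mem hs
      have h' : A + B = A' + B' := by simpa using h
      have := ih A A' B h' (by simpa using hc) (fun d hd => hB d (Multiset.mem_cons_of_mem hd))
        (fun d hd => hB' d (Multiset.mem_cons_of_mem hd))
      simp only [Multiset.map_cons, Multiset.prod_cons]
      linear_combination w s * this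
    · have hsA : s ∈ A := by
        have : s ∈ A + B := by rw [h]; simp
        exact (Multiset.mem_add.1 this).resolve_right hs
      obtain ⟨A, rfl⟩ := Multiset.exists_cons_of_mem hsA
      obtain ⟨d, hd⟩ : ∃ d, d ∈ B := Multiset.card_pos_iff_exists_mem.1 (by rw [hc]; simp)
      obtain ⟨B, rfl⟩ := Multiset.exists_cons_of_mem hd
      -- Trade `u_s w_d` for `u_d w_s`, after which `w_s` can be cancelled from both sides.
      have h' : (d ::ₘ A) + B = A' + B' := by
        simp only [Multiset.cons_add, Multiset.add_cons] at h ⊢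
        rw [Multiset.cons_swap] at h
        exact (Multiset.cons_inj_right s).1 (by rw [Multiset.cons_swap, ← h, Multiset.cons_swap])
      have := ih _ A' B h' (by simpa using hc) (fun d hd => hB d (Multiset.mem_cons_of_mem hd))
        (fun d hd => hB' d (Multiset.mem_cons_of_mem hd))
      have hsd := hw d s (hB d (by simp)) (hB' s (by simp))
      simp only [Multiset.map_cons, Multiset.prod_cons] at this ⊢
      linear_combination w s * this - (A.map u).prod * (B.map w).prod * hsd

/-- For `q ∤ d`, the element `w_d = (n / (q d)) a_d`, so that `(n / q) a_d = d w_d`. -/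
noncomputable def wGen (n q : ℕ) (d : DivIdx n) : Rring n :=
  ((n / q / d.1 : ℕ) : Rring n) * aGen n d

lemma dvd_div_of_not_dvd {n q d : ℕ} (hq : q.Prime) (hqn : q ∣ n) (hd : d ∣ n) (hqd : ¬ q ∣ d) :
    d ∣ n / q := by
  obtain ⟨m, rfl⟩ := hqn
  rw [Nat.mul_div_cancel_left _ hq.pos]
  exact (((Nat.Prime.coprime_iff_not_dvd hq).2 hqd).symm).dvd_of_dvd_mul_left hd

lemma mul_wGen {n q : ℕ} (hq : q.Prime) (hqn : q ∣ n) (d : DivIdx n) (hqd : ¬ q ∣ d.1) :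
    (d.1 : Rring n) * wGen n q d = ((n / q : ℕ) : Rring n) * aGen n d := by
  rw [wGen, ← mul_assoc, ← Nat.cast_mul,
    Nat.mul_div_cancel' (dvd_div_of_not_dvd hq hqn d.2.1 hqd)]

lemma q_mul_wGen {n q : ℕ} (hq : q.Prime) (hqn : q ∣ n) (d : DivIdx n) (hqd : ¬ q ∣ d.1) :
    (q : Rring n) * wGen n q d = 0 := by
  rw [wGen, ← mul_assoc, ← Nat.cast_mul,
    ← Nat.mul_div_assoc _ (dvd_div_of_not_dvd hq hqn d.2.1 hqd), Nat.mul_div_cancel' hqn,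
    torsion_rel]

lemma wGen_exchange {n q : ℕ} (hn : n ≠ 0) (hq : q.Prime) (hqn : q ∣ n) (d s : DivIdx n)
    (hqd : ¬ q ∣ d.1) (hqs : ¬ q ∣ s.1) :
    wGen n q s * uGen n d = uGen n s * wGen n q d := by
  have hd := dvd_div_of_not_dvd hq hqn d.2.1 hqd
  have hs := dvd_div_of_not_dvd hq hqn s.2.1 hqs
  obtain ⟨e, he⟩ := Nat.lcm_dvd hd hs
  have hd0 : 0 < d.1 := Nat.pos_of_ne_zero fun h => hn (Nat.eq_zero_of_zero_dvd (h ▸ d.2.1))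
  have hs0 : 0 < s.1 := Nat.pos_of_ne_zero fun h => hn (Nat.eq_zero_of_zero_dvd (h ▸ s.2.1))
  have h1 : n / q / s.1 = e * (d.1 / Nat.gcd d.1 s.1) := by
    refine Nat.div_eq_of_eq_mul_right hs0 ?_
    rw [he, Nat.lcm, Nat.mul_comm d.1 s.1, Nat.mul_div_assoc _ (Nat.gcd_dvd_left _ _)]
    ring
  have h2 : n / q / d.1 = e * (s.1 / Nat.gcd d.1 s.1) := by
    refine Nat.div_eq_of_eq_mul_right hd0 ?_
    rw [he, Nat.lcm, Nat.mul_div_assoc _ (Nat.gcd_dvd_right _ _)]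
    ring
  have := exchange_rel n d s
  rw [wGen, wGen, h1, h2]
  push_cast
  linear_combination (e : Rring n) * this

lemma div_mul_aGen {n q : ℕ} (hn : n ≠ 0) (d : DivIdx n) (hqd : q ∣ d.1) :
    ((n / q : ℕ) : Rring n) * aGen n d = 0 := by
  obtain ⟨t, ht⟩ := d.2.1
  obtain ⟨r, hr⟩ := hqd
  have hd0 : 0 < d.1 := Nat.pos_of_ne_zero fun h => hn (by rw [ht, h, zero_mul])
  have hq0 : 0 < q := Nat.pos_of_ne_zero fun h => hd0.ne' (by rw [hr, h, zero_mul])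
  have h1 : n / q = r * (n / d.1) := by
    rw [Nat.div_eq_of_eq_mul_right hd0 ht]
    refine Nat.div_eq_of_eq_mul_right hq0 ?_
    rw [ht, hr, mul_assoc]
  rw [h1, Nat.cast_mul, mul_assoc, torsion_rel, mul_zero]

/-- In a degree whose monomials involve `J > 0` of the classes `a_d`, multiplication by
`(n / q) ^ J` lands in a cyclic group of order dividing `q`, and is determined by `augMod`. -/
lemma exists_common_multiple {n q : ℕ} (hn : n ≠ 0) (hq : q.Prime) (hqn : q ∣ n)
    (c : DivIdx n →₀ ℕ) (μ : ℤ) (J : ℕ) (hJ : J ≠ 0)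
    (hJc : (J : ℤ) = (Finsupp.toMultiset c).card - μ) :
    ∃ E : Rring n, (q : Rring n) * E = 0 ∧ ∀ x ∈ Rcomp n (degAlpha n c μ), ∃ z : ℤ,
      ((n / q : ℕ) : Rring n) ^ J * x = z * E ∧ augMod n x = z := by
  classical
  obtain ⟨E, hqE, hE⟩ : ∃ E : Rring n, (q : Rring n) * E = 0 ∧ ∀ A B : Multiset (DivIdx n),
      A + B = Finsupp.toMultiset c → B.card = J → (∀ d ∈ B, ¬ q ∣ d.1) →
        (A.map (uGen n)).prod * (B.map (wGen n q)).prod = E := by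
    by_cases hex : ∃ A B : Multiset (DivIdx n),
      A + B = Finsupp.toMultiset c ∧ B.card = J ∧ (∀ d ∈ B, ¬ q ∣ d.1)
    · obtain ⟨A₀, B₀, h1, h2, h3⟩ := hex
      refine ⟨(A₀.map (uGen n)).prod * (B₀.map (wGen n q)).prod, ?_, fun A B g1 g2 g3 =>
        exchange (uGen n) (wGen n q) (fun d => ¬ q ∣ d.1)
          (fun d s hd hs => wGen_exchange hn hq hqn d s hd hs) B₀ A A₀ B (g1.trans h1.symm)
          (g2.trans h2.symm) g3 h3⟩
      obtain ⟨d, hd⟩ : ∃ d, d ∈ B₀ := Multiset.card_pos_iff_exists_mem.1 (by omega)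
      have hw := q_mul_wGen hq hqn d (h3 d hd)
      obtain ⟨B, rfl⟩ := Multiset.exists_cons_of_mem hd
      rw [Multiset.map_cons, Multiset.prod_cons]
      linear_combination (A₀.map (uGen n)).prod * (B.map (wGen n q)).prod * hw
    · exact ⟨0, by simp, fun A B h1 h2 h3 => absurd ⟨A, B, h1, h2, h3⟩ hex⟩
  refine ⟨E, hqE, ?_⟩
  let G : AddSubgroup (Rring n) :=
    { carrier := {x | ∃ z : ℤ, ((n / q : ℕ) : Rring n) ^ J * x = z * E ∧ augMod n x = z}
      zero_mem' := ⟨0, by simp⟩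
      add_mem' := by
        rintro x y ⟨z, h1, h2⟩ ⟨z', h1', h2'⟩
        exact ⟨z + z', by rw [mul_add, h1, h1']; push_cast; ring, by rw [map_add, h2, h2']; simp⟩
      neg_mem' := by
        rintro x ⟨z, h1, h2⟩
        exact ⟨-z, by push_cast; linear_combination -h1, by rw [map_neg, h2]; simp⟩ }
  refine fun x hx => Rcomp_le n c μ G ?_ hx
  intro A B hAB hA
  have hB : B.card = J := by
    have := congrArg Multiset.card hAB
    rw [Multiset.card_add] at this
    omega
  refine ⟨((B.map fun d => d.1).prod : ℕ), ?_, ?_⟩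
  · by_cases hT : ∀ d ∈ B, ¬ q ∣ d.1
    · have h1 : ((n / q : ℕ) : Rring n) ^ J * (B.map (aGen n)).prod =
          ((B.map fun d => d.1).prod : ℕ) * (B.map (wGen n q)).prod := by
        rw [← hB, Nat.cast_multiset_prod, Multiset.map_map, ← Multiset.prod_map_mul,
          ← Multiset.prod_replicate, ← Multiset.map_const', ← Multiset.prod_map_mul]
        exact congrArg _ (Multiset.map_congr rfl fun d hd => (mul_wGen hq hqn d (hT d hd)).symm)
      rw [← hE A B hAB hB hT, mul_left_comm, h1, Int.cast_natCast]
      ring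
    · -- Both sides vanish: `n / q` kills `a_d`, and the coefficient is divisible by `d`, hence `q`.
      push Not at hT
      obtain ⟨d, hd, hqd⟩ := hT
      have ha := div_mul_aGen hn d hqd
      obtain ⟨B, rfl⟩ := Multiset.exists_cons_of_mem hd
      obtain ⟨r, hr⟩ := hqd
      obtain ⟨j, rfl⟩ := Nat.exists_eq_succ_of_ne_zero hJ
      simp only [Multiset.map_cons, Multiset.prod_cons, hr, pow_succ, Int.cast_natCast,
        Nat.cast_mul, Int.cast_mul]
      linear_combination ((n / q : ℕ) : Rring n) ^ j * (A.map (uGen n)).prod *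
        (B.map (aGen n)).prod * ha - (r : Rring n) * ((B.map fun d => d.1).prod : ℕ) * hqE
  · rw [map_mul, map_multiset_prod, map_multiset_prod, Multiset.map_map, Multiset.map_map]
    simp [Nat.cast_multiset_prod]

/-! ### Vanishing criterion and the theorem -/

/-- On a homogeneous component the two augmentations are jointly injective. -/
lemma eq_zero_of_aug {n : ℕ} (hn : Squarefree n) (hn1 : n ≠ 1) (c : DivIdx n →₀ ℕ) (μ : ℤ)
    (x : Rring n) (hx : x ∈ Rcomp n (degAlpha n c μ)) (h0 : augZ n x = 0)
    (h1 : augMod n x = 0) : x = 0 := by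
  classical
  rcases le_or_gt ((Finsupp.toMultiset c).card - μ : ℤ) 0 with hJ | hJ
  · have hx' := Rcomp_le n c μ
      (AddSubgroup.zmultiples ((Finsupp.toMultiset c).map (uGen n)).prod) (by
        intro A B hAB hA
        have hc := congrArg Multiset.card hAB
        rw [Multiset.card_add] at hc
        obtain rfl : B = 0 := by
          rw [← Multiset.card_eq_zero]
          omega
        rw [add_zero] at hAB
        rw [hAB]
        simp) hx
    obtain ⟨z, rfl⟩ := AddSubgroup.mem_zmultiples_iff.1 hx'
    have hz : z = 0 := by
      simpa [map_multiset_prod, Function.comp_def] using h0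
    rw [hz, zero_smul]
  · obtain ⟨J, hJc⟩ := Int.eq_ofNat_of_zero_le hJ.le
    have key : ∀ q : ℕ, q.Prime → q ∣ n → addOrderOf x ∣ (n / q) ^ J := by
      intro q hq hqn
      obtain ⟨E, hqE, hE⟩ := exists_common_multiple hn.ne_zero hq hqn c μ J (by omega) hJc.symm
      obtain ⟨z, hz, hz'⟩ := hE x hx
      rw [h1] at hz'
      obtain ⟨r, rfl⟩ : (q : ℤ) ∣ z := (Int.natCast_dvd_natCast.2 hqn).trans
        ((ZMod.intCast_zmod_eq_zero_iff_dvd z n).1 hz'.symm)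
      rw [addOrderOf_dvd_iff_nsmul_eq_zero, nsmul_eq_mul, Nat.cast_pow, hz]
      push_cast
      linear_combination (r : Rring n) * hqE
    rw [← AddMonoid.addOrderOf_eq_one_iff]
    -- A prime `r` dividing the order divides some `n / q`, hence `n`; then `r ∣ n / r` as well.
    by_contra hne
    obtain ⟨r, hr, hrx⟩ := Nat.exists_prime_and_dvd hne
    obtain ⟨q, hq, hqn⟩ := Nat.exists_prime_and_dvd hn1
    have hrn : r ∣ n :=
      (hr.dvd_of_dvd_pow (hrx.trans (key q hq hqn))).trans (Nat.div_dvd_of_dvd hqn)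
    have hrr : r * r ∣ n :=
      (Nat.dvd_div_iff_mul_dvd hrn).1 (hr.dvd_of_dvd_pow (hrx.trans (key r hr hrn)))
    exact hr.not_isUnit (hn r hrr)

lemma squarefree_prod_primes {k : ℕ} (p : Fin k → ℕ) (hp : ∀ i, Nat.Prime (p i))
    (hinj : Function.Injective p) : Squarefree (∏ i, p i) := by
  refine Finset.squarefree_prod_of_pairwise_isCoprime ?_ fun i _ => (hp i).squarefree
  intro i _ j _ hij
  exact Nat.coprime_iff_isRelPrime.1 ((Nat.coprime_primes (hp i) (hp j)).2 (hinj.ne hij))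

lemma mAlpha_dvd (n : ℕ) (d : DivIdx n) (c : DivIdx n →₀ ℕ) (μ : ℤ) :
    mAlpha n c μ ∣ mAlpha n (c + Finsupp.single d 1) (μ + 1) := by
  classical
  refine Finset.prod_dvd_prod_of_dvd _ _ fun q _ => ?_
  have h : (c + Finsupp.single d 1).sum (fun e t => if q ∣ e.1 then (t : ℤ) else 0) =
      c.sum (fun e t => if q ∣ e.1 then (t : ℤ) else 0) + if q ∣ d.1 then 1 else 0 := by
    rw [Finsupp.sum_add_index' (by simp) (by intros; split_ifs <;> simp),
      Finsupp.sum_single_index (by simp)]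
    simp
  simp only [Finsupp.sum] at h
  rw [h]
  split_ifs <;> first | exact dvd_rfl | exact one_dvd _ | (exfalso; omega)

/-! ## STATEMENT 13
For every divisor `d` of `n` with `d ≠ n`:
(1) multiplication by `u_d` is injective on `R`, i.e. for every degree
`α = Σ_e c_e ξ^e − 2μ` (`c_e ≥ 0`) the multiplication map `u_d · : R_α → R_{α + ξ^d − 2}`
between homogeneous components is injective; and
(2) for every even degree `α` as above, `m(α)` divides `m(α + ξ^d − 2)`. -/
theorem statement13 (k : ℕ) (p : Fin k → ℕ) (hp : ∀ i, Nat.Prime (p i))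
    (hodd : ∀ i, Odd (p i)) (hinj : Function.Injective p)
    (n : ℕ) (hn : n = ∏ i, p i)
    (d : DivIdx n) (c : DivIdx n →₀ ℕ) (μ : ℤ) :
    (∀ x y : Rring n, x ∈ Rcomp n (degAlpha n c μ) → y ∈ Rcomp n (degAlpha n c μ) →
      uGen n d * x = uGen n d * y → x = y) ∧
    mAlpha n c μ ∣ mAlpha n (c + Finsupp.single d 1) (μ + 1) := by
  refine ⟨fun x y hx hy hxy => ?_, mAlpha_dvd n d c μ⟩
  have hsq : Squarefree n := hn ▸ squarefree_prod_primes p hp hinj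
  have hn1 : n ≠ 1 := fun h => d.2.2 ((Nat.dvd_one.1 (h ▸ d.2.1)).trans h.symm)
  have h0 : uGen n d * (x - y) = 0 := by rw [mul_sub, hxy, sub_self]
  refine sub_eq_zero.1 (eq_zero_of_aug hsq hn1 c μ _ (sub_mem hx hy) ?_ ?_)
  · simpa using congrArg (augZ n) h0
  · simpa using congrArg (augMod n) h0
end

section
/- Let f be any function from the divisors of n to the even integers, let I ⊆ {1,…,k} with complement J, let j ∈ I, and let i ∈ {1,…,k} with p = p_i. Define f' on the divisors of n by f'(m) = f(m) + 2 if p_j | m and f'(m) = f(m) otherwise, and define g on the divisors of n/p_j by g(m) = f(m·p_j). Then ν_p^{I,J}(f) = ν_p^{I∖{j}, J∪{j}}(f') + ν_p^{I∖{j}, J}(g), where the first summand is the count over divisors of n and the second is the count over divisors of n/p_j (so in particular the second summand is 0 when p = p_j). -/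
/-! The subsets of `I` are split according to whether they contain `j`.

* If `i ≠ j`, a subset `S` avoiding `j` has `p j ∤ |S|` and `p j ∤ |S| * p i`, so `f'` and `f`
  agree at both arguments and `S` contributes to the first summand; a subset `insert j T`
  satisfies `|insert j T| = |T| * p j`, so its condition for `f` is the condition of `T` for `g`.
* If `i = j`, only the subsets avoiding `j` are counted on the left. For these `f' = f` at `|S|`
  and `f' = f + 2` at `|S| * p j`; since `f` takes even values on divisors of `n`, the condition
  `f < 0` is the same as `f + 2 ≤ 0`. The second summand vanishes because `n` is squarefree. -/

/-! For a function `f` from the divisors of the ambient integer `N` to the even integers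
(modelling the fixed-point dimensions `m ↦ |α^{C_m}|` of a virtual representation `α`),
an index set `I ⊆ {1,…,k}` (with complement `J`), and an index `i` with `p = p i`, the
count `ν_p^{I,J}(f)` is the number of subsets `𝓘 ⊆ I` with `f(|𝓘|) > 0` and
`f(|𝓘|·p) ≤ 0` (when `i ∈ J`), respectively `f(|𝓘|·p) < 0` (when `i ∈ I`, in which case
subsets containing `i` are not counted, following the convention that `|𝓘|·p` is read as
`|𝓘|` for `p ∣ |𝓘|`, making the two conditions contradictory); the convention `ν_p := 0`
applies whenever `p` does not divide the ambient integer `N`. -/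
def nuCount {k : ℕ} (p : Fin k → ℕ) (N : ℕ) (f : ℕ → ℤ) (I : Finset (Fin k))
    (i : Fin k) : ℕ :=
  if p i ∣ N then
    if i ∈ I then
      (I.powerset.filter fun S =>
        i ∉ S ∧ 0 < f (∏ t ∈ S, p t) ∧ f ((∏ t ∈ S, p t) * p i) < 0).card
    else
      (I.powerset.filter fun S =>
        0 < f (∏ t ∈ S, p t) ∧ f ((∏ t ∈ S, p t) * p i) ≤ 0).card
  else 0

/-- Counting subsets of `I` with a property, split by membership of `j`; subsets containing `j`
are indexed by what remains after removing `j`. -/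
theorem card_powerset_filter_erase {α : Type*} [DecidableEq α] (I : Finset α) {j : α} (hj : j ∈ I)
    (P : Finset α → Prop) [DecidablePred P] :
    (I.powerset.filter P).card = ((I.erase j).powerset.filter P).card +
      ((I.erase j).powerset.filter fun S => P (insert j S)).card := by
  simp only [Finset.card_filter]
  conv_lhs => rw [← Finset.insert_erase hj]
  exact Finset.sum_powerset_insert (Finset.notMem_erase j I) _

theorem prime_dvd_prod_iff_mem {k : ℕ} {p : Fin k → ℕ} (hp : ∀ i, Nat.Prime (p i))
    (hinj : Function.Injective p) (j : Fin k) (S : Finset (Fin k)) :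
    p j ∣ ∏ t ∈ S, p t ↔ j ∈ S := by
  refine ⟨fun h => ?_, fun h => Finset.dvd_prod_of_mem p h⟩
  obtain ⟨t, ht, hd⟩ := ((hp j).prime.dvd_finsetProd_iff p).1 h
  have : j = t := hinj ((Nat.prime_dvd_prime_iff_eq (hp j) (hp t)).1 hd)
  exact this ▸ ht

/-! ## STATEMENT 14
Let `f` be any function from the divisors of `n` to the even integers, let `I ⊆ {1,…,k}`
with complement `J`, let `j ∈ I`, and let `i ∈ {1,…,k}` with `p = p_i`.  Define `f'` on the
divisors of `n` by `f'(m) = f(m) + 2` if `p_j ∣ m` and `f'(m) = f(m)` otherwise, and define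
`g` on the divisors of `n/p_j` by `g(m) = f(m·p_j)`.  Then
`ν_p^{I,J}(f) = ν_p^{I∖{j}, J∪{j}}(f') + ν_p^{I∖{j}, J}(g)`, where the first summand is the
count over divisors of `n` and the second is the count over divisors of `n/p_j` (so in
particular the second summand is `0` when `p = p_j`). -/
theorem statement14 (k : ℕ) (p : Fin k → ℕ) (hp : ∀ i, Nat.Prime (p i))
    (hodd : ∀ i, Odd (p i)) (hinj : Function.Injective p)
    (n : ℕ) (hn : n = ∏ i, p i)
    (f : ℕ → ℤ) (hf : ∀ d, d ∣ n → Even (f d))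
    (I : Finset (Fin k)) (j : Fin k) (hj : j ∈ I) (i : Fin k)
    (f' : ℕ → ℤ) (hf' : ∀ m, f' m = if p j ∣ m then f m + 2 else f m)
    (g : ℕ → ℤ) (hg : ∀ m, g m = f (m * p j)) :
    nuCount p n f I i =
      nuCount p n f' (I.erase j) i + nuCount p (n / p j) g (I.erase j) i := by
  have hdvd := prime_dvd_prod_iff_mem hp hinj
  have hin : p i ∣ n := by rw [hn, hdvd]; exact Finset.mem_univ i
  have hdiv : n / p j = ∏ t ∈ Finset.univ.erase j, p t := by
    rw [hn, ← Finset.mul_prod_erase _ p (Finset.mem_univ j),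
      Nat.mul_div_cancel_left _ (hp j).pos]
  have hmem : ∀ S ∈ (I.erase j).powerset, j ∉ S := fun S hS h =>
    Finset.notMem_erase j I (Finset.mem_powerset.1 hS h)
  have hf'S : ∀ S, j ∉ S → f' (∏ t ∈ S, p t) = f (∏ t ∈ S, p t) := fun S hS => by
    rw [hf', if_neg (by rwa [hdvd])]
  by_cases hij : i = j
  · subst hij
    have h2 : ¬ p i ∣ n / p i := by
      rw [hdiv, hdvd]; exact Finset.notMem_erase i _
    simp only [nuCount, hin, h2, hj, Finset.notMem_erase, if_true, if_false, add_zero]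
    rw [card_powerset_filter_erase I hj]
    simp only [Finset.mem_insert_self, not_true_eq_false, false_and, Finset.filter_false,
      Finset.card_empty, add_zero]
    congr 1
    refine Finset.filter_congr fun S hS => ?_
    have hS' := hmem S hS
    have hdn : (∏ t ∈ S, p t) * p i ∣ n := by
      rw [mul_comm, ← Finset.prod_insert hS', hn]
      exact Finset.prod_dvd_prod_of_subset _ _ _ (Finset.subset_univ _)
    obtain ⟨c, hc⟩ := hf _ hdn
    rw [hf'S S hS', hf' (_ * p i), if_pos (Dvd.intro_left _ rfl)]
    simp only [hS', not_false_eq_true, true_and]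
    constructor <;> rintro ⟨h, h'⟩ <;> exact ⟨h, by omega⟩
  · have h2 : p i ∣ n / p j := by
      rw [hdiv, hdvd]; exact Finset.mem_erase.2 ⟨hij, Finset.mem_univ i⟩
    have hf'Sp : ∀ S, j ∉ S → f' ((∏ t ∈ S, p t) * p i) = f ((∏ t ∈ S, p t) * p i) :=
      fun S hS => by
        rw [hf', if_neg]
        rw [(hp j).dvd_mul, hdvd, Nat.prime_dvd_prime_iff_eq (hp j) (hp i)]
        rintro (h | h)
        · exact hS h
        · exact hij (hinj h).symm
    have hgS : ∀ S, j ∉ S → f (∏ t ∈ insert j S, p t) = g (∏ t ∈ S, p t) := fun S hS => by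
      rw [hg, Finset.prod_insert hS, mul_comm]
    have hgSp : ∀ S, j ∉ S →
        f ((∏ t ∈ insert j S, p t) * p i) = g ((∏ t ∈ S, p t) * p i) := fun S hS => by
      rw [hg, Finset.prod_insert hS]; congr 1; ring
    by_cases hi : i ∈ I
    · have hi' : i ∈ I.erase j := Finset.mem_erase.2 ⟨hij, hi⟩
      simp only [nuCount, hin, h2, hi, hi', if_true]
      rw [card_powerset_filter_erase I hj]
      congr 2 <;> refine Finset.filter_congr fun S hS => ?_
      · rw [hf'S S (hmem S hS), hf'Sp S (hmem S hS)]
      · rw [hgS S (hmem S hS), hgSp S (hmem S hS), Finset.mem_insert, or_iff_right hij]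
    · have hi' : i ∉ I.erase j := fun h => hi (Finset.mem_of_mem_erase h)
      simp only [nuCount, hin, h2, hi, hi', if_true, if_false]
      rw [card_powerset_filter_erase I hj]
      congr 2 <;> refine Finset.filter_congr fun S hS => ?_
      · rw [hf'S S (hmem S hS), hf'Sp S (hmem S hS)]
      · rw [hgS S (hmem S hS), hgSp S (hmem S hS)]
end
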